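/- arXiv:2009.01704 — 2 statements merged into one kernel-verified Lean document; each statement's English description precedes it below -/
import Mathlib

section
/- Let 𝒳, 𝒴, 𝒵 be finite types with |𝒳| = |𝒵| = K, P_{Y|X} column-stochastic, P_{Z|X} invertible column-stochastic, P_X a positive probability vector with P_Y = P_{Y|X} ⬝ P_X and P_Z = P_{Z|X} ⬝ P_X positive; set W₁ = [√P_Y⁻¹] ⬝ P_{Y|X} ⬝ [√P_X] and W₂ = [√P_X⁻¹] ⬝ P_{Z|X}⁻¹ ⬝ [√P_Z]. If the operator norm satisfies ‖W₁ ⬝ W₂‖ > 1, then the set { ‖W₁ ⬝ W₂ ⬝ L‖² : L ∈ ℝ^𝒵, ‖L‖ ≤ 1, ⟨L, √P_Z⟩ = 0 } has greatest element ‖W₁ ⬝ W₂‖²; i.e., the maximum of the constrained problem equals the squared largest singular value of W₁ ⬝ W₂ and is attained by a unit vector orthogonal to √P_Z. -/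
open Matrix

/-- Euclidean norm of a real vector on a finite index type. -/
noncomputable def euclNorm {I : Type*} [Fintype I] (v : I → ℝ) : ℝ :=
  Real.sqrt (∑ i, v i ^ 2)

/-- The ℓ²-operator norm (largest singular value) of a real matrix. -/
noncomputable def matOpNorm {I J : Type*} [Fintype I] [Fintype J] (M : Matrix I J ℝ) : ℝ :=
  sSup {r : ℝ | ∃ v : J → ℝ, euclNorm v ≤ 1 ∧ r = euclNorm (M.mulVec v)}

/-- A matrix is column-stochastic if its entries are nonnegative and each column sums to 1. -/
def ColStochastic {I J : Type*} [Fintype I] (M : Matrix I J ℝ) : Prop :=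
  (∀ i j, 0 ≤ M i j) ∧ ∀ j, ∑ i, M i j = 1

/-!
A vector `v` of the unit ball at which an operator `T` attains its norm satisfies `T†Tv = ‖T‖² v`,
because `‖T†Tv - ‖T‖²v‖² ≤ ‖T‖⁴ - 2‖T‖²‖T‖² + ‖T‖⁴ = 0`. Eigenvectors of the symmetric operator
`T†T` with distinct eigenvalues are orthogonal, so if `T†Ts = μs` with `μ ≠ ‖T‖²`, then `v` is
orthogonal to `s`, and imposing orthogonality to `s` does not lower the maximum of `‖Tv‖²` over the
unit ball.

The matrices `[√P_Y⁻¹] P [√P_X]` compose like the channels `P`, and `√P_X` and `√P_Y` form a pair of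
singular vectors with singular value `1` as soon as `P` maps `P_X` to `P_Y` and has columns summing
to `1`. The latter property passes from a matrix to its inverse although nonnegativity does not.
-/

open scoped InnerProductSpace

section NormAttaining

variable {𝕜 E F : Type*} [RCLike 𝕜]

theorem exists_norm_apply_eq_opNorm [NormedAddCommGroup E] [NormedSpace 𝕜 E] [ProperSpace E]
    [SeminormedAddCommGroup F] [NormedSpace 𝕜 F] (T : E →L[𝕜] F) :
    ∃ v, ‖v‖ ≤ 1 ∧ ‖T v‖ = ‖T‖ := by
  obtain ⟨v, hv, hTv⟩ := (isCompact_closedBall (0 : E) 1).exists_sSup_image_eq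
    (Metric.nonempty_closedBall.2 zero_le_one) T.continuous.norm.continuousOn
  exact ⟨v, mem_closedBall_zero_iff.1 hv, hTv.symm.trans T.sSup_unitClosedBall_eq_norm⟩

variable [NormedAddCommGroup E] [InnerProductSpace 𝕜 E]
  [NormedAddCommGroup F] [InnerProductSpace 𝕜 F] [CompleteSpace F]

theorem adjoint_apply_apply_of_norm_apply_eq_opNorm [CompleteSpace E] (T : E →L[𝕜] F) {v : E}
    (hv : ‖v‖ ≤ 1) (hTv : ‖T v‖ = ‖T‖) : T.adjoint (T v) = ((‖T‖ ^ 2 : ℝ) : 𝕜) • v := by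
  have norm_adjoint_le : ‖T.adjoint (T v)‖ ≤ ‖T‖ ^ 2 :=
    calc ‖T.adjoint (T v)‖ ≤ ‖T.adjoint‖ * ‖T v‖ := T.adjoint.le_opNorm _
      _ = ‖T‖ ^ 2 := by rw [LinearIsometryEquiv.norm_map, hTv, sq]
  have norm_smul_le : ‖((‖T‖ ^ 2 : ℝ) : 𝕜) • v‖ ≤ ‖T‖ ^ 2 := by
    rw [norm_smul, RCLike.norm_ofReal, abs_of_nonneg (sq_nonneg _)]
    exact mul_le_of_le_one_right (sq_nonneg _) hv
  have re_inner_eq :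
      RCLike.re ⟪T.adjoint (T v), ((‖T‖ ^ 2 : ℝ) : 𝕜) • v⟫_𝕜 = ‖T‖ ^ 2 * ‖T‖ ^ 2 := by
    rw [inner_smul_right, RCLike.re_ofReal_mul, ContinuousLinearMap.adjoint_inner_left,
      inner_self_eq_norm_sq, hTv]
  have norm_sub_sq_le : ‖T.adjoint (T v) - ((‖T‖ ^ 2 : ℝ) : 𝕜) • v‖ ^ 2 ≤ 0 := by
    rw [@norm_sub_sq 𝕜, re_inner_eq]
    linarith [pow_le_pow_left₀ (norm_nonneg _) norm_adjoint_le 2,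
      pow_le_pow_left₀ (norm_nonneg _) norm_smul_le 2]
  exact sub_eq_zero.1 (norm_eq_zero.1 (sq_eq_zero_iff.1 (norm_sub_sq_le.antisymm (sq_nonneg _))))

theorem inner_eq_zero_of_norm_apply_eq_opNorm [CompleteSpace E] (T : E →L[𝕜] F) {v s : E} {μ : 𝕜}
    (hv : ‖v‖ ≤ 1) (hTv : ‖T v‖ = ‖T‖) (hs : T.adjoint (T s) = μ • s)
    (hμ : μ ≠ ((‖T‖ ^ 2 : ℝ) : 𝕜)) :
    ⟪v, s⟫_𝕜 = 0 := by
  have hsymm : (T.adjoint ∘L T : E →ₗ[𝕜] E).IsSymmetric :=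
    T.isPositive_adjoint_comp_self.isSymmetric
  have hortho := hsymm.orthogonalFamily_eigenspaces.pairwise hμ.symm
  exact hortho.inner_eq
    (Module.End.mem_eigenspace_iff.2 (adjoint_apply_apply_of_norm_apply_eq_opNorm T hv hTv))
    (Module.End.mem_eigenspace_iff.2 hs)

theorem isGreatest_norm_apply_sq_of_adjoint_apply_apply_eq_smul [ProperSpace E] (T : E →L[𝕜] F)
    {s : E} {μ : 𝕜} (hs : T.adjoint (T s) = μ • s) (hμ : μ ≠ ((‖T‖ ^ 2 : ℝ) : 𝕜)) :
    IsGreatest {r : ℝ | ∃ v : E, ‖v‖ ≤ 1 ∧ ⟪v, s⟫_𝕜 = 0 ∧ r = ‖T v‖ ^ 2} (‖T‖ ^ 2) := by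
  refine ⟨?_, ?_⟩
  · obtain ⟨v, hv, hTv⟩ := exists_norm_apply_eq_opNorm T
    exact ⟨v, hv, inner_eq_zero_of_norm_apply_eq_opNorm T hv hTv hs hμ, by rw [hTv]⟩
  · rintro _ ⟨v, hv, -, rfl⟩
    exact pow_le_pow_left₀ (norm_nonneg _) (T.unit_le_opNorm v hv) 2

end NormAttaining

section EuclideanMatrix

variable {I J : Type*} [Fintype I] [Fintype J]

theorem euclNorm_eq_norm_toLp (v : I → ℝ) : euclNorm v = ‖WithLp.toLp 2 v‖ := by
  simp only [euclNorm, EuclideanSpace.norm_eq, Real.norm_eq_abs, sq_abs]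

section EuclideanCLM

variable [DecidableEq J]

/-- The operator between Euclidean spaces defined by a rectangular real matrix; Mathlib's
`Matrix.toEuclideanCLM` covers square matrices only. -/
noncomputable def euclideanCLM (M : Matrix I J ℝ) : EuclideanSpace ℝ J →L[ℝ] EuclideanSpace ℝ I :=
  (Matrix.toEuclideanLin M).toContinuousLinearMap

theorem euclideanCLM_toLp (M : Matrix I J ℝ) (v : J → ℝ) :
    euclideanCLM M (WithLp.toLp 2 v) = WithLp.toLp 2 (M *ᵥ v) :=
  rfl

theorem adjoint_euclideanCLM [DecidableEq I] (M : Matrix I J ℝ) :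
    (euclideanCLM M).adjoint = euclideanCLM Mᵀ := by
  rw [euclideanCLM, ← LinearMap.adjoint_toContinuousLinearMap,
    ← Matrix.toEuclideanLin_conjTranspose_eq_adjoint, conjTranspose_eq_transpose_of_trivial,
    euclideanCLM]

theorem matOpNorm_eq_norm_euclideanCLM (M : Matrix I J ℝ) : matOpNorm M = ‖euclideanCLM M‖ := by
  rw [← ContinuousLinearMap.sSup_unitClosedBall_eq_norm, matOpNorm]
  congr 1
  ext r
  simp only [euclNorm_eq_norm_toLp, Set.mem_ofPred_eq, Set.mem_image, mem_closedBall_zero_iff,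
    (WithLp.toLp_surjective 2).exists, euclideanCLM_toLp, eq_comm (a := r)]

end EuclideanCLM

theorem isGreatest_euclNorm_mulVec_sq_of_transpose_mulVec_mulVec_eq_smul
    (M : Matrix I J ℝ) {s : J → ℝ} {μ : ℝ} (hs : Mᵀ *ᵥ M *ᵥ s = μ • s) (hμ : μ ≠ matOpNorm M ^ 2) :
    IsGreatest {r : ℝ | ∃ v : J → ℝ, euclNorm v ≤ 1 ∧ v ⬝ᵥ s = 0 ∧ r = euclNorm (M *ᵥ v) ^ 2}
      (matOpNorm M ^ 2) := by
  classical
  have hadjoint :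
      (euclideanCLM M).adjoint (euclideanCLM M (WithLp.toLp 2 s)) = μ • WithLp.toLp 2 s := by
    rw [adjoint_euclideanCLM, euclideanCLM_toLp, euclideanCLM_toLp, hs, WithLp.toLp_smul]
  rw [matOpNorm_eq_norm_euclideanCLM] at hμ ⊢
  convert isGreatest_norm_apply_sq_of_adjoint_apply_apply_eq_smul
    (euclideanCLM M) hadjoint hμ using 1
  ext r
  simp only [euclNorm_eq_norm_toLp, (WithLp.toLp_surjective 2).exists, euclideanCLM_toLp,
    EuclideanSpace.inner_toLp_toLp, star_trivial, dotProduct_comm s]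

end EuclideanMatrix

section DivergenceTransition

variable {I J K : Type*} [Fintype I]

theorem ColStochastic.one_vecMul {P : Matrix I J ℝ} (hP : ColStochastic P) : 1 ᵥ* P = 1 :=
  funext fun j => by simpa only [vecMul, one_dotProduct, Pi.one_apply] using hP.2 j

variable [Fintype J]

theorem one_vecMul_eq_one_of_mul_eq_one [DecidableEq I] {P : Matrix I J ℝ} {Q : Matrix J I ℝ}
    (hP : 1 ᵥ* P = 1) (hPQ : P * Q = 1) : 1 ᵥ* Q = 1 := by
  rw [← hP, vecMul_vecMul, hPQ, vecMul_one]

variable [DecidableEq I] [DecidableEq J]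

/-- The divergence transition matrix `[√p⁻¹] P [√q]` of a channel `P` with input distribution `q`
and output distribution `p`. Both `W₁` and `W₂` of the theorem have this form; `P` may be any
matrix, since an inverse channel has negative entries in general. -/
noncomputable def divTransitionMatrix (P : Matrix I J ℝ) (p : I → ℝ) (q : J → ℝ) :
    Matrix I J ℝ :=
  diagonal (fun i => (√(p i))⁻¹) * P * diagonal (fun j => √(q j))

theorem divTransitionMatrix_mul [Fintype K] [DecidableEq K] (P : Matrix I J ℝ) (Q : Matrix J K ℝ)
    (p : I → ℝ) {q : J → ℝ} (r : K → ℝ) (hq : ∀ j, 0 < q j) :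
    divTransitionMatrix P p q * divTransitionMatrix Q q r = divTransitionMatrix (P * Q) p r := by
  have hcancel : diagonal (fun j => √(q j)) * diagonal (fun j => (√(q j))⁻¹) = 1 := by
    simp only [diagonal_mul_diagonal, mul_inv_cancel₀ (Real.sqrt_pos.2 (hq _)).ne', diagonal_one]
  simp only [divTransitionMatrix, Matrix.mul_assoc]
  rw [← Matrix.mul_assoc (diagonal _) (diagonal _), hcancel, Matrix.one_mul]

variable {P : Matrix I J ℝ} {p : I → ℝ} {q : J → ℝ}

theorem divTransitionMatrix_mulVec_sqrt (hq : ∀ j, 0 ≤ q j) (hPq : P *ᵥ q = p) :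
    divTransitionMatrix P p q *ᵥ (fun j => √(q j)) = fun i => √(p i) := by
  have hsq : diagonal (fun j => √(q j)) *ᵥ (fun j => √(q j)) = q := by
    ext j
    rw [mulVec_diagonal, Real.mul_self_sqrt (hq j)]
  rw [divTransitionMatrix, ← mulVec_mulVec, ← mulVec_mulVec, hsq, hPq]
  ext i
  rw [mulVec_diagonal, inv_mul_eq_div, Real.div_sqrt]

theorem sqrt_vecMul_divTransitionMatrix (q : J → ℝ) (hP : 1 ᵥ* P = 1) (hp : ∀ i, 0 < p i) :
    (fun i => √(p i)) ᵥ* divTransitionMatrix P p q = fun j => √(q j) := by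
  have hcancel : (fun i => √(p i)) ᵥ* diagonal (fun i => (√(p i))⁻¹) = 1 := by
    ext i
    rw [vecMul_diagonal, mul_inv_cancel₀ (Real.sqrt_pos.2 (hp i)).ne', Pi.one_apply]
  rw [divTransitionMatrix, ← vecMul_vecMul, ← vecMul_vecMul, hcancel, hP]
  ext j
  rw [vecMul_diagonal, Pi.one_apply, one_mul]

theorem stmt_16_general (hP : 1 ᵥ* P = 1) (hp : ∀ i, 0 < p i) (hq : ∀ j, 0 ≤ q j)
    (hPq : P *ᵥ q = p) (hgt : 1 < matOpNorm (divTransitionMatrix P p q)) :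
    IsGreatest
      {r : ℝ | ∃ v : J → ℝ, euclNorm v ≤ 1 ∧ ∑ j, v j * √(q j) = 0 ∧
        r = euclNorm (divTransitionMatrix P p q *ᵥ v) ^ 2}
      (matOpNorm (divTransitionMatrix P p q) ^ 2) := by
  refine isGreatest_euclNorm_mulVec_sq_of_transpose_mulVec_mulVec_eq_smul
    (divTransitionMatrix P p q) (s := fun j => √(q j)) (μ := 1) ?_
    (one_lt_pow₀ hgt two_ne_zero).ne
  rw [divTransitionMatrix_mulVec_sqrt hq hPq, mulVec_transpose,
    sqrt_vecMul_divTransitionMatrix q hP hp, one_smul]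

end DivergenceTransition

theorem stmt_16 {𝒳 𝒴 𝒵 : Type*} [Fintype 𝒳] [Fintype 𝒴] [Fintype 𝒵]
    [DecidableEq 𝒳] [DecidableEq 𝒴] [DecidableEq 𝒵]
    (hcard : Fintype.card 𝒳 = Fintype.card 𝒵)
    (PYX : Matrix 𝒴 𝒳 ℝ) (hPYX : ColStochastic PYX)
    (PZX : Matrix 𝒵 𝒳 ℝ) (hPZX : ColStochastic PZX)
    (PZXinv : Matrix 𝒳 𝒵 ℝ) (hinv1 : PZX * PZXinv = 1) (hinv2 : PZXinv * PZX = 1)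
    (PX : 𝒳 → ℝ) (hPXpos : ∀ x, 0 < PX x) (hPXsum : ∑ x, PX x = 1)
    (PY : 𝒴 → ℝ) (hPY : PY = PYX.mulVec PX) (hPYpos : ∀ y, 0 < PY y)
    (PZ : 𝒵 → ℝ) (hPZ : PZ = PZX.mulVec PX) (hPZpos : ∀ z, 0 < PZ z)
    (W₁ : Matrix 𝒴 𝒳 ℝ)
    (hW₁ : W₁ = diagonal (fun y => (Real.sqrt (PY y))⁻¹) * PYX *
      diagonal (fun x => Real.sqrt (PX x)))
    (W₂ : Matrix 𝒳 𝒵 ℝ)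
    (hW₂ : W₂ = diagonal (fun x => (Real.sqrt (PX x))⁻¹) * PZXinv *
      diagonal (fun z => Real.sqrt (PZ z)))
    (hgt : 1 < matOpNorm (W₁ * W₂)) :
    IsGreatest
      {r : ℝ | ∃ L : 𝒵 → ℝ, euclNorm L ≤ 1 ∧ (∑ z, L z * Real.sqrt (PZ z)) = 0 ∧
        r = euclNorm ((W₁ * W₂).mulVec L) ^ 2}
      (matOpNorm (W₁ * W₂) ^ 2) := by
  have hcomp : W₁ * W₂ = divTransitionMatrix (PYX * PZXinv) PY PZ := by
    rw [hW₁, hW₂]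
    exact divTransitionMatrix_mul PYX PZXinv PY PZ hPXpos
  have hinput : PZXinv *ᵥ PZ = PX := by rw [hPZ, mulVec_mulVec, hinv2, one_mulVec]
  have hcolsum : 1 ᵥ* (PYX * PZXinv) = 1 := by
    rw [← vecMul_vecMul, hPYX.one_vecMul, one_vecMul_eq_one_of_mul_eq_one hPZX.one_vecMul hinv1]
  rw [hcomp] at hgt ⊢
  exact stmt_16_general hcolsum hPYpos (fun z => (hPZpos z).le)
    (by rw [← mulVec_mulVec, hinput, hPY]) hgt
end

section
/- Assume the main setup: 𝒳, 𝒴 finite of equal cardinality K, P_{X|Y} an invertible column-stochastic matrix, P_Y a positive probability vector, P_X = P_{X|Y} ⬝ P_Y positive, and W = [√P_Y⁻¹] ⬝ P_{X|Y}⁻¹ ⬝ [√P_X]. Let L* be a unit vector in ℝ^𝒳 with ⟨L*, √P_X⟩ = 0 and ‖W ⬝ L*‖ = ‖W‖ (it exists). For ε ∈ ℝ define the binary uniform mechanism P_{Y|U=0} = P_Y + ε·P_{X|Y}⁻¹ ⬝ [√P_X] ⬝ L*, P_{Y|U=1} = P_Y − ε·P_{X|Y}⁻¹ ⬝ [√P_X]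 ⬝ L*, with P_U(0) = P_U(1) = 1/2. Then: (i) the induced conditionals P_{X|U=u} = P_{X|Y} ⬝ P_{Y|U=u} satisfy P_{X|U=0} = P_X + ε·[√P_X] ⬝ L* and P_{X|U=1} = P_X − ε·[√P_X] ⬝ L*, and χ²(P_{X|U=u} ‖ P_X) = ε² for u = 0, 1, so the strong χ²-privacy criterion with leakage level ε holds; (ii) the function I(ε) = ∑_{u∈{0,1}} (1/2) · ∑_y P_{Y|U=u}(y) · log(P_{Y|U=u}(y)/P_Y(y)) satisfies I(ε) − (ε²/2)·‖W‖² = o(ε²) as ε → 0. -/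
open Matrix Filter Asymptotics

/-!
At a positive vector `p` the relative entropy agrees to second order with `½ χ²`, up to the linear
term `∑ (q - p)`, because `klFun` vanishes at `1` together with its derivative `log` and has second
derivative `1` there. Averaging the perturbations `p ± ε d` cancels the linear term. In both
alphabets `χ²(p ± ε d ‖ p) = ε² ‖[√p⁻¹] d‖²`: for `p = P_X`, `d = [√P_X] L` the norm is `‖L‖`, and
for `p = P_Y`, `d = P_{X|Y}⁻¹ [√P_X] L` it is `‖W L‖`.
-/

open InformationTheory Topology

lemma euclNorm_sq {ι : Type*} [Fintype ι] (v : ι → ℝ) : euclNorm v ^ 2 = ∑ i, v i ^ 2 :=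
  Real.sq_sqrt (Finset.sum_nonneg fun _ _ => sq_nonneg _)

section Divergence

variable {ι : Type*} [Fintype ι]

/-- The relative entropy `D(q ‖ p)`, whose average over `u` with `q = P_{Y|U=u}` and `p = P_Y` is
the mutual information `I(U;Y)`. It is defined for all real vectors, without normalization. -/
noncomputable def relEntropy (q p : ι → ℝ) : ℝ :=
  ∑ i, q i * Real.log (q i / p i)

/-- The divergence `χ²(q ‖ p)`, which measures the leakage of the mechanism and is the second-order
part of `2 * relEntropy q p`. It is meaningful only where `p` has no zero entry. -/
noncomputable def chiSqDiv (q p : ι → ℝ) : ℝ :=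
  ∑ i, (q i - p i) ^ 2 / p i

lemma klFun_sub_half_sq_isLittleO :
    (fun x : ℝ => klFun x - (x - 1) ^ 2 / 2) =o[𝓝 1] fun x => (x - 1) ^ 2 := by
  have hlog : (fun x : ℝ => Real.log x - (x - 1)) =o[𝓝 1] fun x => x - 1 := by
    simpa using (Real.hasDerivAt_log one_ne_zero).isLittleO
  have hderiv : ∀ x ∈ Set.Ioi (0 : ℝ), HasDerivWithinAt (fun x => klFun x - (x - 1) ^ 2 / 2)
      (Real.log x - (x - 1)) (Set.Ioi 0) x := fun x hx => by
    have hsq : HasDerivAt (fun x : ℝ => (x - 1) ^ 2 / 2) (x - 1) x := by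
      simpa using (((hasDerivAt_id x).sub_const 1).pow 2).div_const 2
    exact ((hasDerivAt_klFun hx.ne').sub hsq).hasDerivWithinAt
  simpa [klFun_one, nhdsWithin_eq_nhds.2 (Ioi_mem_nhds (zero_lt_one (α := ℝ)))] using
    (convex_Ioi (0 : ℝ)).isLittleO_pow_succ_real (n := 1) (Set.mem_Ioi.2 one_pos) hderiv
      (by simpa using hlog.mono nhdsWithin_le_nhds)

lemma relEntropy_eq_sum_mul_klFun_add_sum_sub {p : ι → ℝ} (hp : ∀ i, p i ≠ 0) (q : ι → ℝ) :
    relEntropy q p = ∑ i, p i * klFun (q i / p i) + ∑ i, (q i - p i) := by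
  rw [relEntropy, ← Finset.sum_add_distrib]
  refine Finset.sum_congr rfl fun i _ => ?_
  have := hp i
  rw [klFun]
  field_simp
  ring

lemma chiSqDiv_eq_sum_mul_sq {p : ι → ℝ} (hp : ∀ i, p i ≠ 0) (q : ι → ℝ) :
    chiSqDiv q p = ∑ i, p i * (q i / p i - 1) ^ 2 :=
  Finset.sum_congr rfl fun i _ => by
    have := hp i
    field_simp

lemma relEntropy_sub_half_chiSqDiv_isLittleO {p : ι → ℝ} (hp : ∀ i, p i ≠ 0) :
    (fun q : ι → ℝ => relEntropy q p - (∑ i, (q i - p i) + chiSqDiv q p / 2))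
      =o[𝓝 p] fun q => ‖q - p‖ ^ 2 := by
  have hterm : ∀ i, (fun q : ι → ℝ => p i * (klFun (q i / p i) - (q i / p i - 1) ^ 2 / 2))
      =o[𝓝 p] fun q => ‖q - p‖ ^ 2 := fun i => by
    have hratio : Tendsto (fun q : ι → ℝ => q i / p i) (𝓝 p) (𝓝 1) :=
      ((continuous_apply i).div_const (p i)).tendsto' p 1 (div_self (hp i))
    have hbound : (fun q : ι → ℝ => q i / p i - 1) =O[𝓝 p] fun q => ‖q - p‖ :=
      IsBigO.of_bound ‖(p i)⁻¹‖ <| .of_forall fun q => by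
        have hsub : q i / p i - 1 = (p i)⁻¹ * (q - p) i := by
          rw [Pi.sub_apply, mul_sub, inv_mul_cancel₀ (hp i), div_eq_inv_mul]
        rw [norm_norm, hsub, norm_mul]
        gcongr
        exact norm_le_pi_norm (q - p) i
    exact ((klFun_sub_half_sq_isLittleO.comp_tendsto hratio).trans_isBigO
      (hbound.pow 2)).const_mul_left (p i)
  refine (IsLittleO.sum fun i (_ : i ∈ Finset.univ) => hterm i).congr_left fun q => ?_
  rw [relEntropy_eq_sum_mul_klFun_add_sum_sub hp, chiSqDiv_eq_sum_mul_sq hp]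
  simp only [Finset.sum_apply, mul_sub (p _), Finset.sum_sub_distrib, Finset.sum_div, mul_div_assoc]
  ring

end Divergence

section Perturbation

variable {ι : Type*} [Fintype ι] [DecidableEq ι]

lemma chiSqDiv_add_smul {p : ι → ℝ} (hp : ∀ i, 0 ≤ p i) (d : ι → ℝ) (ε : ℝ) :
    chiSqDiv (p + ε • d) p =
      ε ^ 2 * euclNorm ((diagonal fun i => (√(p i))⁻¹) *ᵥ d) ^ 2 := by
  rw [euclNorm_sq, Finset.mul_sum, chiSqDiv]
  refine Finset.sum_congr rfl fun i _ => ?_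
  rw [mulVec_diagonal, mul_pow, inv_pow, Real.sq_sqrt (hp i), Pi.add_apply, Pi.smul_apply,
    smul_eq_mul, add_sub_cancel_left]
  ring

lemma chiSqDiv_sub_smul {p : ι → ℝ} (hp : ∀ i, 0 ≤ p i) (d : ι → ℝ) (ε : ℝ) :
    chiSqDiv (p - ε • d) p =
      ε ^ 2 * euclNorm ((diagonal fun i => (√(p i))⁻¹) *ᵥ d) ^ 2 := by
  simpa [sub_eq_add_neg] using chiSqDiv_add_smul hp d (-ε)

lemma diagonal_inv_sqrt_mulVec_diagonal_sqrt_mulVec {p : ι → ℝ} (hp : ∀ i, 0 < p i)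
    (v : ι → ℝ) :
    (diagonal fun i => (√(p i))⁻¹) *ᵥ ((diagonal fun i => √(p i)) *ᵥ v) = v := by
  ext i
  rw [mulVec_diagonal, mulVec_diagonal, inv_mul_cancel_left₀ (Real.sqrt_pos.2 (hp i)).ne']

lemma relEntropy_add_smul_isLittleO {p : ι → ℝ} (hp : ∀ i, 0 < p i) (d : ι → ℝ) :
    (fun ε : ℝ => relEntropy (p + ε • d) p -
        (ε * ∑ i, d i + ε ^ 2 / 2 * euclNorm ((diagonal fun i => (√(p i))⁻¹) *ᵥ d) ^ 2))
      =o[𝓝 0] fun ε => ε ^ 2 := by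
  have hline : Tendsto (fun ε : ℝ => p + ε • d) (𝓝 0) (𝓝 p) :=
    (by fun_prop : Continuous fun ε : ℝ => p + ε • d).tendsto' 0 p (by simp)
  have hbound : (fun ε : ℝ => ‖p + ε • d - p‖ ^ 2) =O[𝓝 0] fun ε => ε ^ 2 :=
    IsBigO.of_bound (‖d‖ ^ 2) <| .of_forall fun ε => by
      simp [norm_smul, mul_pow, mul_comm]
  refine ((relEntropy_sub_half_chiSqDiv_isLittleO fun i => (hp i).ne').comp_tendsto
    hline |>.trans_isBigO hbound).congr_left fun ε => ?_
  simp only [Function.comp_apply, chiSqDiv_add_smul fun i => (hp i).le, Pi.add_apply,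
    Pi.smul_apply, smul_eq_mul, add_sub_cancel_left, Finset.mul_sum]
  ring

lemma average_relEntropy_add_smul_sub_smul_isLittleO {p : ι → ℝ} (hp : ∀ i, 0 < p i)
    (d : ι → ℝ) :
    (fun ε : ℝ => 1 / 2 * relEntropy (p + ε • d) p + 1 / 2 * relEntropy (p - ε • d) p -
        ε ^ 2 / 2 * euclNorm ((diagonal fun i => (√(p i))⁻¹) *ᵥ d) ^ 2)
      =o[𝓝 0] fun ε => ε ^ 2 := by
  have hplus := relEntropy_add_smul_isLittleO hp d
  have hminus := (hplus.comp_tendsto (continuous_neg.tendsto' (0 : ℝ) 0 neg_zero)).congr_right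
    fun ε => neg_sq ε
  refine ((hplus.add hminus).const_mul_left (1 / 2)).congr_left fun ε => ?_
  simp only [Function.comp_apply, neg_smul, ← sub_eq_add_neg]
  ring

end Perturbation

theorem stmt_18_general {𝒳 𝒴 : Type*} [Fintype 𝒳] [Fintype 𝒴] [DecidableEq 𝒳] [DecidableEq 𝒴]
    (PXY : Matrix 𝒳 𝒴 ℝ) (PXYinv : Matrix 𝒴 𝒳 ℝ) (hinv : PXY * PXYinv = 1)
    (PY : 𝒴 → ℝ) (hPYpos : ∀ y, 0 < PY y)
    (PX : 𝒳 → ℝ) (hPX : PX = PXY.mulVec PY) (hPXpos : ∀ x, 0 < PX x)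
    (W : Matrix 𝒴 𝒳 ℝ)
    (hW : W = diagonal (fun y => (√(PY y))⁻¹) * PXYinv *
      diagonal (fun x => √(PX x)))
    (L : 𝒳 → ℝ)
    (PYgU : ℝ → Fin 2 → 𝒴 → ℝ)
    (hPYgU0 : ∀ ε, PYgU ε 0 = fun y =>
      PY y + ε * PXYinv.mulVec ((diagonal fun x => √(PX x)).mulVec L) y)
    (hPYgU1 : ∀ ε, PYgU ε 1 = fun y =>
      PY y - ε * PXYinv.mulVec ((diagonal fun x => √(PX x)).mulVec L) y)
    (PXgU : ℝ → Fin 2 → 𝒳 → ℝ) (hPXgU : ∀ ε u, PXgU ε u = PXY.mulVec (PYgU ε u))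
    (I : ℝ → ℝ)
    (hI : ∀ ε, I ε = ∑ u : Fin 2, (1 / 2 : ℝ) *
      ∑ y, PYgU ε u y * Real.log (PYgU ε u y / PY y)) :
    (∀ ε : ℝ,
      PXgU ε 0 = (fun x => PX x + ε * (diagonal fun x => √(PX x)).mulVec L x) ∧
      PXgU ε 1 = (fun x => PX x - ε * (diagonal fun x => √(PX x)).mulVec L x) ∧
      ∀ u : Fin 2, ∑ x, (PXgU ε u x - PX x) ^ 2 / PX x = ε ^ 2 * euclNorm L ^ 2)
    ∧
    (fun ε => I ε - ε ^ 2 / 2 * euclNorm (W.mulVec L) ^ 2) =o[𝓝 0] (fun ε => ε ^ 2) := by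
  set s := (diagonal fun x => √(PX x)).mulVec L with hs
  set d := PXYinv.mulVec s with hd
  have hPXYd : PXY.mulVec d = s := by rw [hd, mulVec_mulVec, hinv, one_mulVec]
  have hY0 : ∀ ε, PYgU ε 0 = PY + ε • d := hPYgU0
  have hY1 : ∀ ε, PYgU ε 1 = PY - ε • d := hPYgU1
  have hX0 : ∀ ε, PXgU ε 0 = PX + ε • s := fun ε => by
    rw [hPXgU, hY0, mulVec_add, mulVec_smul, hPXYd, hPX]
  have hX1 : ∀ ε, PXgU ε 1 = PX - ε • s := fun ε => by
    rw [hPXgU, hY1, mulVec_sub, mulVec_smul, hPXYd, hPX]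
  have hsL : (diagonal fun x => (√(PX x))⁻¹).mulVec s = L :=
    diagonal_inv_sqrt_mulVec_diagonal_sqrt_mulVec hPXpos L
  have hdWL : (diagonal fun y => (√(PY y))⁻¹).mulVec d = W.mulVec L := by
    rw [hW, hd, hs, mulVec_mulVec, mulVec_mulVec, Matrix.mul_assoc]
  refine ⟨fun ε => ⟨hX0 ε, hX1 ε, Fin.forall_fin_two.2 ⟨?_, ?_⟩⟩, ?_⟩
  · rw [hX0, ← hsL]
    exact chiSqDiv_add_smul (fun x => (hPXpos x).le) s ε
  · rw [hX1, ← hsL]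
    exact chiSqDiv_sub_smul (fun x => (hPXpos x).le) s ε
  · refine (average_relEntropy_add_smul_sub_smul_isLittleO hPYpos d).congr_left fun ε => ?_
    rw [hI, Fin.sum_univ_two, hY0, hY1, hdWL, relEntropy, relEntropy]

theorem stmt_18 {𝒳 𝒴 : Type*} [Fintype 𝒳] [Fintype 𝒴] [DecidableEq 𝒳] [DecidableEq 𝒴]
    (hcard : Fintype.card 𝒳 = Fintype.card 𝒴)
    (PXY : Matrix 𝒳 𝒴 ℝ) (hPXY : ColStochastic PXY)
    (PXYinv : Matrix 𝒴 𝒳 ℝ) (hinv1 : PXY * PXYinv = 1) (hinv2 : PXYinv * PXY = 1)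
    (PY : 𝒴 → ℝ) (hPYpos : ∀ y, 0 < PY y) (hPYsum : ∑ y, PY y = 1)
    (PX : 𝒳 → ℝ) (hPX : PX = PXY.mulVec PY) (hPXpos : ∀ x, 0 < PX x)
    (W : Matrix 𝒴 𝒳 ℝ)
    (hW : W = diagonal (fun y => (Real.sqrt (PY y))⁻¹) * PXYinv *
      diagonal (fun x => Real.sqrt (PX x)))
    (Lstar : 𝒳 → ℝ) (hL1 : euclNorm Lstar = 1)
    (hL2 : (∑ x, Lstar x * Real.sqrt (PX x)) = 0)
    (hL3 : euclNorm (W.mulVec Lstar) = matOpNorm W)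
    (PYgU : ℝ → Fin 2 → 𝒴 → ℝ)
    (hPYgU0 : ∀ ε, PYgU ε 0 = fun y =>
      PY y + ε * PXYinv.mulVec ((diagonal fun x => Real.sqrt (PX x)).mulVec Lstar) y)
    (hPYgU1 : ∀ ε, PYgU ε 1 = fun y =>
      PY y - ε * PXYinv.mulVec ((diagonal fun x => Real.sqrt (PX x)).mulVec Lstar) y)
    (PXgU : ℝ → Fin 2 → 𝒳 → ℝ) (hPXgU : ∀ ε u, PXgU ε u = PXY.mulVec (PYgU ε u))
    (I : ℝ → ℝ)
    (hI : ∀ ε, I ε = ∑ u : Fin 2, (1/2 : ℝ) *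
      ∑ y, PYgU ε u y * Real.log (PYgU ε u y / PY y)) :
    -- (i) induced conditionals on X and exact χ²-leakage ε²
    (∀ ε : ℝ,
      PXgU ε 0 = (fun x => PX x + ε * (diagonal fun x => Real.sqrt (PX x)).mulVec Lstar x) ∧
      PXgU ε 1 = (fun x => PX x - ε * (diagonal fun x => Real.sqrt (PX x)).mulVec Lstar x) ∧
      ∀ u : Fin 2, ∑ x, (PXgU ε u x - PX x) ^ 2 / PX x = ε ^ 2)
    ∧
    -- (ii) the utility is (ε²/2)·‖W‖² up to o(ε²)
    (fun ε => I ε - ε ^ 2 / 2 * matOpNorm W ^ 2) =o[nhds 0] (fun ε => ε ^ 2) := by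
  simpa only [hL1, hL3, one_pow, mul_one] using stmt_18_general PXY PXYinv hinv1 PY hPYpos PX hPX
    hPXpos W hW Lstar PYgU hPYgU0 hPYgU1 PXgU hPXgU I hI
end
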